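/- Let f : ℤ_2 → ℤ_2 be a 1-Lipschitz function. Then f is measure-preserving (with respect to the Haar probability measure on ℤ_2) if and only if both of the following hold: (i) f is uniformly differentiable modulo 2 with N_1(f) = 1; (ii) f(0) + f(1) ≡ 1 (mod 2), (f(2) − f(0))/2 ≡ 1 (mod 2), and (f(3) − f(1))/2 ≡ 1 (mod 2). -/

import Mathlib

/-!
The bridge between the two sides is the metric condition that `f` is an isometry of `ℤ_[2]`.

* Measure preservation forces an isometry: if `f` brought `x, y` strictly closer than
  `r = ‖x - y‖`, the preimage of the ball of radius `r` at `f x` would contain the two disjoint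
  balls of radius `r` at `x` and `y`, hence have twice its measure
  (`isometry_of_measurePreserving`).
* Conversely an isometry of a compact space is onto (`surjective_of_isometry_of_compact`), so
  preimages of balls are balls of the same radius. Balls have translation-invariant measure and
  form a generating π-system, so the two measures agree (`measurePreserving_of_isometry`).
* For 1-Lipschitz `f`, being an isometry means `f (u + 2 ^ s * h) ≡ f u + 2 ^ s * h` modulo
  `2 ^ (s + 1)` for all `u, h, s`, because two elements of the same norm `2 ^ (-s)` are congruent
  modulo `2 ^ (s + 1)`. For `s ≥ 1` this is differentiability modulo `2` with an odd derivative.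
  The derivative modulo `2` depends only on `u` modulo `2` (`UnifDiffMod2.two_dvd_sub`), so its
  oddness is tested at `u = 0, 1`, where `f 2 - f 0` and `f 3 - f 1` read it off. The case
  `s = 0` is the condition on `f 0 + f 1`.
-/
open MeasureTheory

noncomputable instance : MeasurableSpace ℤ_[2] := borel _
instance : BorelSpace ℤ_[2] := ⟨rfl⟩

/-- The normalized Haar probability measure on the compact additive group `ℤ_[2]`. -/
noncomputable def haarZ2 : Measure ℤ_[2] :=
  Measure.addHaarMeasure ⟨⟨Set.univ, isCompact_univ⟩, by simp⟩

/-- `f` is uniformly differentiable modulo `2` with `N₁(f) = 1`. -/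
def UnifDiffMod2 (f : ℤ_[2] → ℤ_[2]) : Prop :=
  ∃ d : ℤ_[2] → ℤ_[2], ∀ (u h : ℤ_[2]) (s : ℕ), 1 ≤ s →
    (2 : ℤ_[2]) ^ (s + 1) ∣ f (u + (2 : ℤ_[2]) ^ s * h) - (f u + (2 : ℤ_[2]) ^ s * h * d u)


lemma norm_le_two_zpow_iff (x : ℤ_[2]) (n : ℕ) :
    ‖x‖ ≤ (2 : ℝ) ^ (-n : ℤ) ↔ (2 : ℤ_[2]) ^ n ∣ x := by
  have h := PadicInt.norm_le_pow_iff_mem_span_pow x n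
  rw [Ideal.mem_span_singleton] at h
  exact_mod_cast h

lemma dvd_of_norm_le {x y : ℤ_[2]} {n : ℕ} (h : ‖x‖ ≤ ‖y‖) (hy : (2 : ℤ_[2]) ^ n ∣ y) :
    (2 : ℤ_[2]) ^ n ∣ x :=
  (norm_le_two_zpow_iff x n).1 (h.trans ((norm_le_two_zpow_iff y n).2 hy))

lemma two_dvd_or_two_dvd_sub_one (x : ℤ_[2]) : (2 : ℤ_[2]) ∣ x ∨ (2 : ℤ_[2]) ∣ x - 1 := by
  obtain ⟨n, hn, hx⟩ := PadicInt.exists_mem_range (p := 2) x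
  rw [PadicInt.maximalIdeal_eq_span_p, Ideal.mem_span_singleton] at hx
  interval_cases n
  · left; simpa using hx
  · right; simpa using hx

/-- Elements of equal norm have the same leading binary digit. -/
lemma pow_succ_dvd_sub_of_norm_eq {a b : ℤ_[2]} (h : ‖a‖ = ‖b‖) {s : ℕ}
    (hb : (2 : ℤ_[2]) ^ s ∣ b) : (2 : ℤ_[2]) ^ (s + 1) ∣ a - b := by
  by_cases hb' : (2 : ℤ_[2]) ^ (s + 1) ∣ b
  · exact dvd_sub (dvd_of_norm_le h.le hb') hb'
  have ha' : ¬ (2 : ℤ_[2]) ^ (s + 1) ∣ a := fun ha => hb' (dvd_of_norm_le h.ge ha)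
  obtain ⟨a, rfl⟩ := dvd_of_norm_le h.le hb
  obtain ⟨b, rfl⟩ := hb
  rw [pow_succ] at *
  have hA := (two_dvd_or_two_dvd_sub_one a).resolve_left
    fun h => ha' (mul_dvd_mul_left _ h)
  have hB := (two_dvd_or_two_dvd_sub_one b).resolve_left
    fun h => hb' (mul_dvd_mul_left _ h)
  rw [← mul_sub]
  refine mul_dvd_mul_left _ ?_
  simpa using dvd_sub hA hB

lemma norm_half_sub_one_le_iff (a : ℤ_[2]) :
    ‖((a : ℤ_[2]) : ℚ_[2]) / 2 - 1‖ ≤ (2 : ℝ)⁻¹ ↔ (2 : ℤ_[2]) ^ 2 ∣ a - 2 := by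
  have h2 : ‖(2 : ℚ_[2])‖ = 2⁻¹ := by
    have := Padic.norm_p (p := 2)
    exact_mod_cast this
  have h : ((a : ℤ_[2]) : ℚ_[2]) / 2 - 1 = ((a - 2 : ℤ_[2]) : ℚ_[2]) / 2 := by
    have h' : ((2 : ℤ_[2]) : ℚ_[2]) = 2 := PadicInt.coe_natCast 2
    rw [PadicInt.coe_sub, h']
    ring
  rw [h, norm_div, h2, ← norm_le_two_zpow_iff, ← PadicInt.norm_def]
  norm_num
  constructor <;> intro <;> linarith

/-- If a point `y` had distance at least `ε` from the range, the orbit of `y` would be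
`ε`-separated, contradicting compactness. -/
lemma surjective_of_isometry_of_compact {X : Type*} [MetricSpace X] [CompactSpace X] {f : X → X}
    (hf : Isometry f) : Function.Surjective f := by
  intro y
  by_contra hy
  have hcl : IsClosed (Set.range f) := (isCompact_range hf.continuous).isClosed
  obtain ⟨ε, hε, hball⟩ := Metric.isOpen_iff.1 hcl.isOpen_compl y (by simpa using hy)
  have hiter : ∀ n, Isometry f^[n] := fun n => by
    induction n with
    | zero => exact isometry_id
    | succ n ih => exact ih.comp hf
  have hsep : ∀ n m, n < m → ε ≤ dist (f^[n] y) (f^[m] y) := by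
    intro n m hnm
    obtain ⟨k, rfl⟩ := Nat.exists_eq_add_of_lt hnm
    rw [add_assoc, Function.iterate_add_apply, (hiter n).dist_eq,
      Function.iterate_succ_apply', dist_comm]
    by_contra! hlt
    exact hball hlt ⟨_, rfl⟩
  obtain ⟨a, φ, hφ, ha⟩ := CompactSpace.tendsto_subseq (fun n => f^[n] y)
  obtain ⟨N, hN⟩ := Metric.cauchySeq_iff'.1 ha.cauchySeq ε hε
  have h1 := hN (N + 1) (Nat.le_succ N)
  rw [dist_comm] at h1
  exact absurd (hsep _ _ (hφ (Nat.lt_succ_self N))) (not_le.2 h1)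

instance : Measure.IsAddHaarMeasure haarZ2 := by
  unfold haarZ2
  infer_instance

instance : IsProbabilityMeasure haarZ2 := ⟨by
  unfold haarZ2
  exact Measure.addHaarMeasure_self⟩

lemma haarZ2_ball (x y : ℤ_[2]) (r : ℝ) :
    haarZ2 (Metric.ball x r) = haarZ2 (Metric.ball y r) := by
  rw [Measure.addHaar_ball_center, ← Measure.addHaar_ball_center haarZ2 y]

lemma isometry_of_measurePreserving {f : ℤ_[2] → ℤ_[2]}
    (hf : ∀ x y : ℤ_[2], ‖f x - f y‖ ≤ ‖x - y‖) (hm : MeasurePreserving f haarZ2 haarZ2) :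
    Isometry f := by
  refine Isometry.of_dist_eq fun x y => ?_
  simp only [← dist_eq_norm] at hf
  refine le_antisymm (hf x y) ?_
  by_contra! hlt
  set r := dist x y with hr
  have hr0 : 0 < r := dist_nonneg.trans_lt hlt
  have hdisj : Disjoint (Metric.ball x r) (Metric.ball y r) := by
    refine (IsUltrametricDist.ball_eq_or_disjoint x y r).resolve_left fun h => ?_
    have : y ∈ Metric.ball x r := h ▸ Metric.mem_ball_self hr0
    rw [Metric.mem_ball, dist_comm] at this
    exact lt_irrefl _ this
  have hsub : Metric.ball x r ∪ Metric.ball y r ⊆ f ⁻¹' Metric.ball (f x) r := by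
    rintro z (hz | hz)
    · exact (hf z x).trans_lt hz
    · refine (dist_triangle_max (f z) (f y) (f x)).trans_lt (max_lt ((hf z y).trans_lt hz) ?_)
      rwa [dist_comm]
  have h := measure_mono (μ := haarZ2) hsub
  rw [measure_union hdisj Metric.isOpen_ball.measurableSet,
    hm.measure_preimage Metric.isOpen_ball.measurableSet.nullMeasurableSet,
    haarZ2_ball y x, haarZ2_ball (f x) x] at h
  have hpos := Metric.measure_ball_pos haarZ2 x hr0
  exact absurd h (not_le.2 (ENNReal.lt_add_right (measure_ne_top _ _) hpos.ne'))

lemma measurePreserving_of_isometry {f : ℤ_[2] → ℤ_[2]} (hf : Isometry f) :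
    MeasurePreserving f haarZ2 haarZ2 := by
  have hmeas : Measurable f := hf.continuous.measurable
  refine ⟨hmeas, ?_⟩
  have : IsProbabilityMeasure (Measure.map f haarZ2) :=
    Measure.isProbabilityMeasure_map hmeas.aemeasurable
  let C : Set (Set ℤ_[2]) := {s | ∃ x r, 0 < r ∧ s = Metric.ball x r}
  have hbasis : TopologicalSpace.IsTopologicalBasis C := by
    refine TopologicalSpace.isTopologicalBasis_of_isOpen_of_nhds ?_ ?_
    · rintro _ ⟨x, r, -, rfl⟩
      exact Metric.isOpen_ball
    · intro a u ha hu
      obtain ⟨ε, hε, h⟩ := Metric.isOpen_iff.1 hu a ha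
      exact ⟨_, ⟨a, ε, hε, rfl⟩, Metric.mem_ball_self hε, h⟩
  refine ext_of_generate_finite C ?_ ?_ ?_ (by simp)
  · exact (BorelSpace.measurable_eq).trans hbasis.borel_eq_generateFrom
  · rintro _ ⟨x, r, hr, rfl⟩ _ ⟨y, s, hs, rfl⟩ hne
    -- two balls with a common point are nested, so their intersection is the smaller one
    rcases IsUltrametricDist.ball_subset_trichotomy x y r s with h | h | h
    · exact ⟨x, r, hr, Set.inter_eq_left.2 h⟩
    · exact ⟨y, s, hs, Set.inter_eq_right.2 h⟩
    · exact absurd h (Set.not_disjoint_iff_nonempty_inter.2 hne)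
  · rintro _ ⟨y, r, -, rfl⟩
    obtain ⟨x, rfl⟩ := surjective_of_isometry_of_compact hf y
    rw [Measure.map_apply hmeas Metric.isOpen_ball.measurableSet, hf.preimage_ball,
      haarZ2_ball]

/-- The derivative modulo `2` of a function with `N₁(f) = 1` is `2`-periodic. -/
lemma UnifDiffMod2.two_dvd_sub {f d : ℤ_[2] → ℤ_[2]}
    (hd : ∀ (u h : ℤ_[2]) (s : ℕ), 1 ≤ s →
      (2 : ℤ_[2]) ^ (s + 1) ∣ f (u + (2 : ℤ_[2]) ^ s * h) - (f u + (2 : ℤ_[2]) ^ s * h * d u))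
    (u k : ℤ_[2]) : (2 : ℤ_[2]) ∣ d (u + 2 * k) - d u := by
  -- go from `u` to `u + 2k + 2` directly and through `u + 2k`
  obtain ⟨a, ha⟩ := hd u k 1 le_rfl
  obtain ⟨b, hb⟩ := hd u (k + 1) 1 le_rfl
  obtain ⟨c, hc⟩ := hd (u + 2 * k) 1 1 le_rfl
  have e : u + (2 : ℤ_[2]) ^ 1 * (k + 1) = u + 2 * k + 2 ^ 1 * 1 := by ring
  rw [e] at hb
  rw [pow_one] at ha
  refine ⟨b - a - c, mul_left_cancel₀ (two_ne_zero : (2 : ℤ_[2]) ≠ 0) ?_⟩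
  linear_combination hb - hc - ha

/-- If `‖f x - f y‖ < ‖x - y‖ = 2 ^ (-s)`, the congruence at level `s` would make `2 ^ (s + 1)`
divide `x - y`. -/
lemma isometry_of_forall_dvd {f : ℤ_[2] → ℤ_[2]}
    (hf : ∀ x y : ℤ_[2], ‖f x - f y‖ ≤ ‖x - y‖)
    (h : ∀ (u h : ℤ_[2]) (s : ℕ),
      (2 : ℤ_[2]) ^ (s + 1) ∣ f (u + (2 : ℤ_[2]) ^ s * h) - f u - (2 : ℤ_[2]) ^ s * h) :
    Isometry f := by
  refine Isometry.of_dist_eq fun x y => ?_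
  rw [dist_eq_norm, dist_eq_norm]
  refine le_antisymm (hf x y) ?_
  by_contra! hlt
  have hne : x - y ≠ 0 := by
    intro h0
    rw [h0, norm_zero] at hlt
    exact absurd hlt (not_lt.2 (norm_nonneg _))
  have hv := PadicInt.norm_eq_zpow_neg_valuation hne
  set s := (x - y).valuation
  push_cast at hv
  obtain ⟨k, hk⟩ := (norm_le_two_zpow_iff _ s).1 hv.le
  have hx : x = y + 2 ^ s * k := by rw [← hk]; ring
  have h1 : (2 : ℤ_[2]) ^ (s + 1) ∣ f x - f y := by
    rw [← norm_le_two_zpow_iff]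
    have := (PadicInt.norm_le_pow_iff_norm_lt_pow_add_one (f x - f y) (-(s + 1 : ℕ) : ℤ)).2
    push_cast at this ⊢
    refine this ?_
    rwa [neg_add, neg_add_cancel_right, ← hv]
  have h2 := dvd_sub h1 (h y k s)
  rw [← hx, sub_sub_cancel, ← hk, ← norm_le_two_zpow_iff, hv] at h2
  have := (zpow_le_zpow_iff_right₀ (one_lt_two : (1 : ℝ) < 2)).1 h2
  push_cast at this
  omega

lemma unifDiffMod2_and_of_isometry {f : ℤ_[2] → ℤ_[2]} (hf : Isometry f) :
    UnifDiffMod2 f ∧ (2 : ℤ_[2]) ∣ f 0 + f 1 - 1 ∧ (2 : ℤ_[2]) ^ 2 ∣ f 2 - f 0 - 2 ∧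
      (2 : ℤ_[2]) ^ 2 ∣ f 3 - f 1 - 2 := by
  have hn : ∀ x y b : ℤ_[2], x - y = b → ‖f x - f y‖ = ‖b‖ := by
    rintro x y _ rfl
    rw [← dist_eq_norm, ← dist_eq_norm, hf.dist_eq]
  refine ⟨⟨fun _ => 1, fun u h s _ => ?_⟩, ?_, ?_, ?_⟩
  · rw [mul_one, ← sub_sub]
    exact pow_succ_dvd_sub_of_norm_eq (hn _ _ _ (by ring)) (dvd_mul_right _ _)
  · obtain ⟨c, hc⟩ := pow_succ_dvd_sub_of_norm_eq (s := 0) (hn 1 0 1 (by ring)) (by simp)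
    exact ⟨c + f 0, by linear_combination hc⟩
  · exact pow_succ_dvd_sub_of_norm_eq (s := 1) (hn 2 0 2 (by ring)) (by simp)
  · exact pow_succ_dvd_sub_of_norm_eq (s := 1) (hn 3 1 2 (by ring)) (by simp)

lemma isometry_of_unifDiffMod2 {f : ℤ_[2] → ℤ_[2]}
    (hf : ∀ x y : ℤ_[2], ‖f x - f y‖ ≤ ‖x - y‖) (hu : UnifDiffMod2 f)
    (h01 : (2 : ℤ_[2]) ∣ f 0 + f 1 - 1) (h2 : (2 : ℤ_[2]) ^ 2 ∣ f 2 - f 0 - 2)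
    (h3 : (2 : ℤ_[2]) ^ 2 ∣ f 3 - f 1 - 2) : Isometry f := by
  obtain ⟨d, hd⟩ := hu
  have hodd : ∀ u, (2 : ℤ_[2]) ∣ d u - 1 := by
    have h0 : (2 : ℤ_[2]) ∣ d 0 - 1 := by
      obtain ⟨a, ha⟩ := h2
      obtain ⟨b, hb⟩ := hd 0 1 1 le_rfl
      rw [show (0 : ℤ_[2]) + 2 ^ 1 * 1 = 2 by ring] at hb
      refine ⟨a - b, mul_left_cancel₀ (two_ne_zero : (2 : ℤ_[2]) ≠ 0) ?_⟩
      linear_combination ha - hb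
    have h1 : (2 : ℤ_[2]) ∣ d 1 - 1 := by
      obtain ⟨a, ha⟩ := h3
      obtain ⟨b, hb⟩ := hd 1 1 1 le_rfl
      rw [show (1 : ℤ_[2]) + 2 ^ 1 * 1 = 3 by ring] at hb
      refine ⟨a - b, mul_left_cancel₀ (two_ne_zero : (2 : ℤ_[2]) ≠ 0) ?_⟩
      linear_combination ha - hb
    intro u
    rcases two_dvd_or_two_dvd_sub_one u with ⟨k, hk⟩ | ⟨k, hk⟩
    · have := dvd_add (UnifDiffMod2.two_dvd_sub hd 0 k) h0
      rwa [zero_add, ← hk, sub_add_sub_cancel] at this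
    · have := dvd_add (UnifDiffMod2.two_dvd_sub hd 1 k) h1
      rwa [← hk, add_sub_cancel, sub_add_sub_cancel] at this
  have hlip : ∀ x y : ℤ_[2], (2 : ℤ_[2]) ∣ x - y → (2 : ℤ_[2]) ∣ f x - f y := by
    intro x y h
    simpa using dvd_of_norm_le (n := 1) (hf x y) (by simpa using h)
  have hpar : ∀ x, (2 : ℤ_[2]) ∣ f x - f 0 - x := by
    intro x
    rcases two_dvd_or_two_dvd_sub_one x with h | h
    · exact dvd_sub (hlip x 0 (by simpa using h)) h
    · obtain ⟨a, ha⟩ := hlip x 1 h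
      obtain ⟨b, hb⟩ := h01
      obtain ⟨c, hc⟩ := h
      exact ⟨a + b - c - f 0, by linear_combination ha + hb - hc⟩
  refine isometry_of_forall_dvd hf fun u h s => ?_
  rcases Nat.eq_zero_or_pos s with rfl | hs
  · have := dvd_sub (hpar (u + 2 ^ 0 * h)) (hpar u)
    rw [zero_add, pow_one]
    convert this using 1
    ring
  · obtain ⟨a, ha⟩ := hd u h s hs
    obtain ⟨b, hb⟩ := hodd u
    exact ⟨a + h * b, by linear_combination ha + 2 ^ s * h * hb⟩

/-- Proposition 4.3: a 1-Lipschitz function `f` on `ℤ_[2]` is measure-preserving iff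
(i) `f` is uniformly differentiable modulo 2 with `N₁(f) = 1`, and
(ii) `f(0) + f(1) ≡ 1 (mod 2)`, `(f(2) − f(0))/2 ≡ 1 (mod 2)`,
`(f(3) − f(1))/2 ≡ 1 (mod 2)`. -/
theorem measurePreserving_iff_unifDiff_and_vanDerPut (f : ℤ_[2] → ℤ_[2])
    (hf : ∀ x y : ℤ_[2], ‖f x - f y‖ ≤ ‖x - y‖) :
    MeasurePreserving f haarZ2 haarZ2 ↔
      (UnifDiffMod2 f ∧
        ((2 : ℤ_[2]) ∣ f 0 + f 1 - 1 ∧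
          ‖((f 2 - f 0 : ℤ_[2]) : ℚ_[2]) / 2 - 1‖ ≤ (2 : ℝ)⁻¹ ∧
          ‖((f 3 - f 1 : ℤ_[2]) : ℚ_[2]) / 2 - 1‖ ≤ (2 : ℝ)⁻¹)) := by
  rw [norm_half_sub_one_le_iff, norm_half_sub_one_le_iff]
  constructor
  · intro h
    exact unifDiffMod2_and_of_isometry (isometry_of_measurePreserving hf h)
  · rintro ⟨hu, h01, h2, h3⟩
    exact measurePreserving_of_isometry (isometry_of_unifDiffMod2 hf hu h01 h2 h3)
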